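/- arXiv:1506.08912 — 2 statements merged into one kernel-verified Lean document; each statement's English description precedes it below -/
import Mathlib

section
/- For every real β ≥ 0, all integers m ≥ n+1 with n ≥ 1, and every quaternion q ∈ ℍ with conjugate q̄: Z^{(β)}_{m,n}(q,q̄) = Z^{(β)}_{m−1,n−1}(q,q̄) + q · Z^{(β)}_{m−1,n}(q,q̄). -/
open Finset Quaternion

/-- Pochhammer symbol `(a)_j = a (a+1) ⋯ (a+j-1)`. -/
noncomputable def poch (a : ℝ) (j : ℕ) : ℝ := ∏ i ∈ Finset.range j, (a + i)

/-- The quaternionic 2D Laguerre polynomial `Z^{(β)}_{m,n}(q,q̄)` (for `m ≥ n`). -/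
noncomputable def Zq (β : ℝ) (m n : ℕ) (q : ℍ[ℝ]) : ℍ[ℝ] :=
  ∑ k ∈ Finset.range (n + 1),
    ((-1 : ℝ) ^ (n - k) * poch (β + 1) m /
        (k.factorial * (n - k).factorial * poch (β + 1) (m - k))) •
      (q ^ (m - k) * (star q) ^ (n - k))

theorem poch_pos' (β : ℝ) (hβ : 0 ≤ β) (j : ℕ) : 0 < poch (β + 1) j :=
  Finset.prod_pos fun i _ => by positivity

theorem poch_succ' (a : ℝ) (j : ℕ) : poch a (j + 1) = poch a j * (a + j) := by
  simp [poch, Finset.prod_range_succ]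

/-- Recurrence `Z^{(β)}_{m,n}(q,q̄) = Z^{(β)}_{m−1,n−1}(q,q̄) + q · Z^{(β)}_{m−1,n}(q,q̄)`. -/
theorem quat_recurrence_split (β : ℝ) (hβ : 0 ≤ β) (m n : ℕ) (hn : 1 ≤ n)
    (hmn : n + 1 ≤ m) (q : ℍ[ℝ]) :
    Zq β m n q = Zq β (m - 1) (n - 1) q + q * Zq β (m - 1) n q := by
  obtain ⟨N, rfl⟩ : ∃ N, n = N + 1 := ⟨n - 1, by omega⟩
  obtain ⟨M, rfl⟩ : ∃ M, m = M + 1 := ⟨m - 1, by omega⟩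
  simp only [Nat.add_sub_cancel]
  unfold Zq
  rw [Finset.sum_range_succ' _ (N + 1), Finset.sum_range_succ' (n := N + 1), mul_add,
    ← add_assoc, Finset.mul_sum, ← Finset.sum_add_distrib]
  congr 1
  · apply Finset.sum_congr rfl
    intro k hk
    have hk' : k ≤ N := by simpa [Nat.lt_succ_iff] using hk
    obtain ⟨s, rfl⟩ := Nat.exists_eq_add_of_le hk'
    obtain ⟨r, rfl⟩ : ∃ r, M = k + 1 + r := ⟨M - (k + 1), by omega⟩
    have e1 : k + 1 + r + 1 - (k + 1) = r + 1 := by omega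
    have e2 : k + 1 + r - k = r + 1 := by omega
    have e3 : k + 1 + r - (k + 1) = r := by omega
    have e4 : k + s + 1 - (k + 1) = s := by omega
    have e5 : k + s - k = s := by omega
    rw [e1, e2, e3, e4, e5, mul_smul_comm, ← mul_assoc, ← pow_succ', ← add_smul]
    congr 1
    have h1 := (poch_pos' β hβ r).ne'
    have h2 : β + 1 + (r : ℝ) ≠ 0 := by positivity
    have h3 : (k.factorial : ℝ) ≠ 0 := by positivity
    have h4 : (s.factorial : ℝ) ≠ 0 := by positivity
    have h5 : (k : ℝ) + 1 ≠ 0 := by positivity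
    rw [poch_succ' _ (k + 1 + r), poch_succ' _ r, Nat.factorial_succ]
    push_cast
    field_simp
    ring
  · have h1 := (poch_pos' β hβ M).ne'
    have h2 := (poch_pos' β hβ (M + 1)).ne'
    simp only [Nat.sub_zero]
    rw [mul_smul_comm, ← mul_assoc, ← pow_succ']
    congr 1
    field_simp
end

section
/- Let β ≥ 0 be real and let m ≥ n ≥ 0 and t ≥ s ≥ 0 be integers. Then ∫_ℂ conj(z) · Z^{(β)}_{m,n}(z, conj(z)) · conj(Z^{(β)}_{t,s}(z, conj(z))) dν(z) = 0 if t−s ≠ m−n−1, and if t−s = m−n−1 (so in particular m ≥ n+1) it equals [(−1)^{n+s} (−β−m)_n (−β−t)_s Γ(m−n+β+1)/(n!·s!)] · Σ_{j=0}^{n} Σ_{k=0}^{s} [(β+m−n+1)_{j+k} (−n)_j (−s)_k / ((β+m−n+1)_j (β+m−n)_k · j!·k!)]. -/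
open MeasureTheory Finset

/-- The generalized 2D Laguerre polynomial `Z^{(β)}_{m,n}(z,w)` (for `m ≥ n`). -/
noncomputable def Zc (β : ℝ) (m n : ℕ) (z w : ℂ) : ℂ :=
  ∑ k ∈ Finset.range (n + 1),
    (((-1 : ℝ) ^ (n - k) * poch (β + 1) m /
        (k.factorial * (n - k).factorial * poch (β + 1) (m - k)) : ℝ) : ℂ) *
      z ^ (m - k) * w ^ (n - k)

lemma poch_add (a : ℝ) (i j : ℕ) : poch a (i + j) = poch a i * poch (a + i) j := by
  unfold poch
  rw [Finset.prod_range_add]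
  congr 1
  refine Finset.prod_congr rfl fun x _ => ?_
  push_cast; ring

lemma poch_pos (a : ℝ) (ha : 0 < a) (j : ℕ) : 0 < poch a j := by
  unfold poch
  exact Finset.prod_pos fun i _ => by positivity

lemma poch_neg (a : ℝ) (n : ℕ) : poch (-a) n = (-1) ^ n * poch (a - n + 1) n := by
  unfold poch
  have hc : (-1 : ℝ) ^ n = ∏ _i ∈ Finset.range n, (-1 : ℝ) := by simp
  rw [← Finset.prod_range_reflect, hc, ← Finset.prod_mul_distrib]
  refine Finset.prod_congr rfl fun x hx => ?_
  have : x + 1 ≤ n := Finset.mem_range.1 hx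
  have h : ((n - 1 - x : ℕ) : ℝ) = n - 1 - x := by
    rw [Nat.sub_sub, Nat.cast_sub (by omega)]; push_cast; ring
  rw [h]; ring

lemma poch_one (n : ℕ) : poch 1 n = n.factorial := by
  unfold poch
  rw [← Finset.prod_range_add_one_eq_factorial]
  push_cast
  exact Finset.prod_congr rfl fun x _ => by ring

lemma poch_neg_nat (n j : ℕ) (h : j ≤ n) :
    poch (-(n : ℝ)) j = (-1) ^ j * n.factorial / (n - j).factorial := by
  rw [poch_neg]
  have h1 := poch_add 1 (n - j) j
  rw [Nat.sub_add_cancel h, poch_one, poch_one, Nat.cast_sub h] at h1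
  rw [h1, show (1 : ℝ) + (n - j) = n - j + 1 by ring]
  have : ((n - j).factorial : ℝ) ≠ 0 := by positivity
  field_simp

lemma Gamma_poch (a : ℝ) (ha : 0 < a) (j : ℕ) :
    Real.Gamma (a + j) = Real.Gamma a * poch a j := by
  induction j with
  | zero => simp [poch]
  | succ j ih =>
    have : poch a (j + 1) = poch a j * (a + j) := by simp [poch, Finset.prod_range_succ]
    rw [this, Nat.cast_succ, ← add_assoc, Real.Gamma_add_one (by positivity), ih]; ring

lemma coeff_eq (β : ℝ) (hβ : 0 ≤ β) (d n j : ℕ) (h : j ≤ n) :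
    (-1 : ℝ) ^ j * poch (β + 1) (n + d) /
        ((n - j).factorial * j.factorial * poch (β + 1) (d + j)) =
      ((-1) ^ n * poch (-β - (n + d : ℕ)) n / n.factorial) *
       (poch (-(n : ℝ)) j / (poch (β + d + 1) j * j.factorial)) := by
  rw [poch_neg_nat n j h, show -β - ((n + d : ℕ) : ℝ) = -(β + n + d) by push_cast; ring, poch_neg,
    add_comm n d, poch_add _ d n, poch_add _ d j]
  rw [show β + n + d - n + 1 = β + d + 1 by ring, show β + 1 + (d : ℝ) = β + d + 1 by ring]
  have h1 := (poch_pos (β + d + 1) (by positivity) j).ne'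
  have h2 := (poch_pos (β + 1) (by positivity) d).ne'
  have h3 : ((n - j).factorial : ℝ) ≠ 0 := by positivity
  have h4 : ((n).factorial : ℝ) ≠ 0 := by positivity
  have h5 : ((j).factorial : ℝ) ≠ 0 := by positivity
  have h6 : ((-1 : ℝ) ^ n) * (-1) ^ n = 1 := by rw [← mul_pow]; simp
  field_simp
  linear_combination (-poch (β + d + 1) n) * h6

lemma Zc_eq (β : ℝ) (hβ : 0 ≤ β) (d n : ℕ) (z w : ℂ) :
    Zc β (n + d) n z w = ∑ j ∈ Finset.range (n + 1),
      ((((-1) ^ n * poch (-β - (n + d : ℕ)) n / n.factorial) *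
       (poch (-(n : ℝ)) j / (poch (β + d + 1) j * j.factorial)) : ℝ) : ℂ) *
        z ^ (d + j) * w ^ j := by
  unfold Zc
  rw [← Finset.sum_range_reflect]
  refine Finset.sum_congr rfl fun j hj => ?_
  have hj' : j ≤ n := Nat.lt_succ_iff.1 (Finset.mem_range.1 hj)
  rw [← coeff_eq β hβ d n j hj', show n + 1 - 1 - j = n - j by omega,
    show n - (n - j) = j by omega, show n + d - (n - j) = d + j by omega]

lemma weight_integral (β : ℝ) (hβ : 0 ≤ β) (a : ℕ) :
    ∫ z : ℂ, (Real.pi⁻¹ * ‖z‖ ^ (2 * β) * Real.exp (-(‖z‖ ^ 2))) * ‖z‖ ^ (2 * a)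
      = Real.Gamma (β + a + 1) := by
  have h := Complex.integral_rpow_mul_exp_neg_rpow (p := 2) (q := 2 * β + 2 * a) (by norm_num)
    (by have : (0:ℝ) ≤ a := by positivity
        linarith)
  rw [show (2 * β + 2 * a + 2) / 2 = β + a + 1 by ring] at h
  have : ∀ z : ℂ, (Real.pi⁻¹ * ‖z‖ ^ (2 * β) * Real.exp (-(‖z‖ ^ 2))) * ‖z‖ ^ (2 * a)
      = Real.pi⁻¹ * (‖z‖ ^ (2 * β + 2 * a) * Real.exp (-(‖z‖ ^ (2 : ℝ)))) := by
    intro z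
    rw [Real.rpow_add_of_nonneg (norm_nonneg z) (by positivity) (by positivity)]
    rw [show (2 * (a : ℝ)) = ((2 * a : ℕ) : ℝ) by push_cast; ring, Real.rpow_natCast,
      Real.rpow_two]
    ring
  simp_rw [this]
  rw [integral_const_mul, h]
  have := Real.pi_ne_zero
  field_simp

lemma weight_integrable_even (β : ℝ) (hβ : 0 ≤ β) (a : ℕ) :
    Integrable (fun z : ℂ =>
      (Real.pi⁻¹ * ‖z‖ ^ (2 * β) * Real.exp (-(‖z‖ ^ 2))) * ‖z‖ ^ (2 * a)) := by
  by_contra hc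
  have h := weight_integral β hβ a
  rw [integral_undef hc] at h
  exact (Real.Gamma_pos_of_pos (by positivity : 0 < β + a + 1)).ne h

lemma weight_meas (β : ℝ) : Measurable (fun z : ℂ =>
    Real.pi⁻¹ * ‖z‖ ^ (2 * β) * Real.exp (-(‖z‖ ^ 2))) := by fun_prop

lemma weight_integrable (β : ℝ) (hβ : 0 ≤ β) (a b : ℕ) :
    Integrable (fun z : ℂ =>
      (Real.pi⁻¹ * ‖z‖ ^ (2 * β) * Real.exp (-(‖z‖ ^ 2))) • (z ^ a * starRingEnd ℂ z ^ b)) := by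
  refine ((weight_integrable_even β hβ a).add (weight_integrable_even β hβ b)).mono' ?_ ?_
  · refine ((weight_meas β).aestronglyMeasurable).smul ?_
    exact (Continuous.aestronglyMeasurable (by fun_prop))
  · refine Filter.Eventually.of_forall fun z => ?_
    have hw : 0 ≤ Real.pi⁻¹ * ‖z‖ ^ (2 * β) * Real.exp (-(‖z‖ ^ 2)) := by positivity
    rw [norm_smul, Real.norm_of_nonneg hw]
    simp only [norm_mul, norm_pow, RCLike.norm_conj, Pi.add_apply]
    rw [← mul_add]
    refine mul_le_mul_of_nonneg_left ?_ hw
    have h1 : ‖z‖ ^ (2 * a) = (‖z‖ ^ a) ^ 2 := by rw [← pow_mul, mul_comm]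
    have h2 : ‖z‖ ^ (2 * b) = (‖z‖ ^ b) ^ 2 := by rw [← pow_mul, mul_comm]
    rw [h1, h2]
    nlinarith [sq_nonneg (‖z‖ ^ a - ‖z‖ ^ b), sq_nonneg (‖z‖ ^ a), sq_nonneg (‖z‖ ^ b)]

lemma moment_off (β : ℝ) (a b : ℕ) (hab : a ≠ b) :
    ∫ z : ℂ, (Real.pi⁻¹ * ‖z‖ ^ (2 * β) * Real.exp (-(‖z‖ ^ 2))) •
      (z ^ a * starRingEnd ℂ z ^ b) = 0 := by
  set f : ℂ → ℂ := fun z => (Real.pi⁻¹ * ‖z‖ ^ (2 * β) * Real.exp (-(‖z‖ ^ 2))) •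
      (z ^ a * starRingEnd ℂ z ^ b) with hf
  set θ : ℝ := Real.pi / ((a : ℝ) - b) with hθ
  have hab' : (a : ℝ) - b ≠ 0 := sub_ne_zero.2 (by exact_mod_cast hab)
  have hmp := (rotation (Circle.exp θ)).measurePreserving
  have h1 : ∫ z, f (rotation (Circle.exp θ) z) = ∫ z, f z :=
    hmp.integral_comp (rotation (Circle.exp θ)).toHomeomorph.measurableEmbedding f
  have hc : ((Circle.exp θ : ℂ)) ^ a * starRingEnd ℂ (Circle.exp θ : ℂ) ^ b = -1 := by
    rw [Circle.coe_exp, ← Complex.exp_conj, ← Complex.exp_nat_mul, ← Complex.exp_nat_mul,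
      ← Complex.exp_add, ← Complex.exp_pi_mul_I]
    congr 1
    simp only [map_mul, Complex.conj_ofReal, Complex.conj_I]
    have : ((a : ℂ) - b) * θ = Real.pi := by
      rw [hθ]
      have : ((a : ℝ) - b) * (Real.pi / ((a : ℝ) - b)) = Real.pi := by field_simp
      exact_mod_cast this
    linear_combination Complex.I * this
  have h2 : ∀ z, f (rotation (Circle.exp θ) z) = - f z := by
    intro z
    simp only [hf, rotation_apply, norm_mul, Circle.norm_coe, one_mul, map_mul, mul_pow]
    rw [← smul_neg]
    congr 1
    linear_combination (z ^ a * starRingEnd ℂ z ^ b) * hc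
  simp_rw [h2] at h1
  rw [integral_neg] at h1
  linear_combination (-1/2 : ℂ) * h1

lemma moment_diag (β : ℝ) (hβ : 0 ≤ β) (a : ℕ) :
    ∫ z : ℂ, (Real.pi⁻¹ * ‖z‖ ^ (2 * β) * Real.exp (-(‖z‖ ^ 2))) •
      (z ^ a * starRingEnd ℂ z ^ a) = (Real.Gamma (β + a + 1) : ℂ) := by
  rw [← weight_integral β hβ a, ← integral_complex_ofReal]
  congr 1
  ext1 z
  rw [← mul_pow, Complex.mul_conj, Complex.normSq_eq_norm_sq, pow_mul, Complex.real_smul]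
  push_cast
  ring

lemma main_expand (β : ℝ) (hβ : 0 ≤ β) (d n e s : ℕ)
    (ν : Measure ℂ)
    (hν : ν = volume.withDensity (fun z =>
      ENNReal.ofReal (Real.pi⁻¹ * ‖z‖ ^ (2 * β) * Real.exp (-(‖z‖ ^ 2))))) :
    ∫ z : ℂ, starRingEnd ℂ z * Zc β (n + d) n z (starRingEnd ℂ z) *
          starRingEnd ℂ (Zc β (s + e) s z (starRingEnd ℂ z)) ∂ν =
    ∑ j ∈ Finset.range (n + 1), ∑ k ∈ Finset.range (s + 1),
      (((((-1) ^ n * poch (-β - (n + d : ℕ)) n / n.factorial) *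
       (poch (-(n : ℝ)) j / (poch (β + d + 1) j * j.factorial)) *
       (((-1) ^ s * poch (-β - (s + e : ℕ)) s / s.factorial) *
       (poch (-(s : ℝ)) k / (poch (β + e + 1) k * k.factorial))) : ℝ)) : ℂ) *
      if d = e + 1 then ((Real.Gamma (β + (d + j + k : ℕ) + 1) : ℝ) : ℂ) else 0 := by
  have hM := weight_meas β
  rw [hν, integral_withDensity_eq_integral_toReal_smul (hM.ennreal_ofReal)
    (Filter.Eventually.of_forall fun z => ENNReal.ofReal_lt_top)]
  have key : ∀ z : ℂ, (ENNReal.ofReal (Real.pi⁻¹ * ‖z‖ ^ (2 * β) * Real.exp (-(‖z‖ ^ 2)))).toReal •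
      (starRingEnd ℂ z * Zc β (n + d) n z (starRingEnd ℂ z) *
          starRingEnd ℂ (Zc β (s + e) s z (starRingEnd ℂ z))) =
      ∑ j ∈ Finset.range (n + 1), ∑ k ∈ Finset.range (s + 1),
      (((((-1) ^ n * poch (-β - (n + d : ℕ)) n / n.factorial) *
       (poch (-(n : ℝ)) j / (poch (β + d + 1) j * j.factorial)) *
       (((-1) ^ s * poch (-β - (s + e : ℕ)) s / s.factorial) *
       (poch (-(s : ℝ)) k / (poch (β + e + 1) k * k.factorial))) : ℝ)) : ℂ) *
       ((Real.pi⁻¹ * ‖z‖ ^ (2 * β) * Real.exp (-(‖z‖ ^ 2))) •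
        (z ^ (d + j + k) * starRingEnd ℂ z ^ (e + 1 + j + k))) := by
    intro z
    rw [ENNReal.toReal_ofReal (by positivity), Zc_eq β hβ, Zc_eq β hβ, map_sum, mul_assoc (starRingEnd ℂ z),
      Finset.sum_mul_sum, Finset.mul_sum, Finset.smul_sum]
    refine Finset.sum_congr rfl fun j _ => ?_
    rw [Finset.mul_sum, Finset.smul_sum]
    refine Finset.sum_congr rfl fun k _ => ?_
    rw [mul_smul_comm]
    congr 1
    simp only [map_mul, map_pow, Complex.conj_conj, Complex.conj_ofReal]
    rw [Complex.ofReal_mul (_ * _) (_ * _)]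
    ring
  simp_rw [key]
  rw [integral_finsetSum]
  · refine Finset.sum_congr rfl fun j _ => ?_
    rw [integral_finsetSum]
    · refine Finset.sum_congr rfl fun k _ => ?_
      rw [integral_const_mul]
      congr 1
      split_ifs with h
      · rw [h]; exact moment_diag β hβ _
      · exact moment_off β _ _ (by omega)
    · intro k _
      exact (weight_integrable β hβ _ _).const_mul _
  · intro j _
    exact integrable_finsetSum _ fun k _ => (weight_integrable β hβ _ _).const_mul _

/-- Integral formula for `∫ z̄ Z^{(β)}_{m,n}(z,z̄) conj(Z^{(β)}_{t,s}(z,z̄)) dν(z)`,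
with `dν(z) = π⁻¹ |z|^{2β} e^{−|z|²} dA(z)`. -/
theorem laguerre2D_integral_zbar (β : ℝ) (hβ : 0 ≤ β) (m n t s : ℕ)
    (hmn : n ≤ m) (hts : s ≤ t)
    (ν : Measure ℂ)
    (hν : ν = volume.withDensity (fun z =>
      ENNReal.ofReal (Real.pi⁻¹ * ‖z‖ ^ (2 * β) * Real.exp (-(‖z‖ ^ 2))))) :
    (((t : ℤ) - s ≠ (m : ℤ) - n - 1) →
      ∫ z : ℂ, starRingEnd ℂ z * Zc β m n z (starRingEnd ℂ z) *
          starRingEnd ℂ (Zc β t s z (starRingEnd ℂ z)) ∂ν = 0) ∧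
    (((t : ℤ) - s = (m : ℤ) - n - 1) →
      ∫ z : ℂ, starRingEnd ℂ z * Zc β m n z (starRingEnd ℂ z) *
          starRingEnd ℂ (Zc β t s z (starRingEnd ℂ z)) ∂ν
        = ((((-1 : ℝ) ^ (n + s) * poch (-β - m) n * poch (-β - t) s *
              Real.Gamma ((m : ℝ) - n + β + 1) / (n.factorial * s.factorial)) *
            ∑ j ∈ Finset.range (n + 1), ∑ k ∈ Finset.range (s + 1),
              poch (β + (m : ℝ) - n + 1) (j + k) * poch (-(n : ℝ)) j * poch (-(s : ℝ)) k /
                (poch (β + (m : ℝ) - n + 1) j * poch (β + (m : ℝ) - n) k *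
                  j.factorial * k.factorial) : ℝ) : ℂ)) := by
  obtain ⟨d, rfl⟩ := Nat.exists_eq_add_of_le hmn
  obtain ⟨e, rfl⟩ := Nat.exists_eq_add_of_le hts
  rw [main_expand β hβ d n e s ν hν]
  constructor
  · intro h
    have : d ≠ e + 1 := by push_cast at h; omega
    simp [this]
  · intro h
    have hd : d = e + 1 := by push_cast at h; omega
    simp only [hd, if_true]
    simp only [← Complex.ofReal_mul, ← Complex.ofReal_sum, Finset.mul_sum]
    congr 1
    refine Finset.sum_congr rfl fun j _ => Finset.sum_congr rfl fun k _ => ?_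
    have hG := Gamma_poch (β + e + 2) (by positivity) (j + k)
    rw [show β + ((e + 1 + j + k : ℕ) : ℝ) + 1 = β + e + 2 + (j + k : ℕ) by push_cast; ring, hG]
    rw [show β + ((n + (e + 1) : ℕ) : ℝ) - n + 1 = β + e + 2 by push_cast; ring,
      show β + ((n + (e + 1) : ℕ) : ℝ) - n = β + e + 1 by push_cast; ring,
      show ((n + (e + 1) : ℕ) : ℝ) - n + β + 1 = β + e + 2 by push_cast; ring,
      show β + ((e + 1 : ℕ) : ℝ) + 1 = β + e + 2 by push_cast; ring]
    have h1 := (poch_pos (β + e + 2) (by positivity) j).ne'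
    have h2 := (poch_pos (β + e + 1) (by positivity) k).ne'
    field_simp
    try ring
end
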